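/- Let R : ℝⁿ → ℝ^m satisfy R^T k ≠ 0 for all nonzero k ∈ ℤ^m, and let φ ∈ L^p(Ω; C_♯(Y^m)), 1 < p < ∞, with Ω ⊂ ℝⁿ bounded open. Then lim_{η→0} ∫_Ω |φ(x, Rx/η)|^p dx = ∫_Ω ∫_{Y^m} |φ(x,y)|^p dx dy. -/

import Mathlib

open MeasureTheory Filter Topology Matrix

noncomputable section

/-- The open unit cube `Y^m = (0,1)^m`. -/
def cube (m : ℕ) : Set (Fin m → ℝ) := Set.univ.pi fun _ => Set.Ioo (0:ℝ) 1

/-- `Y^m`-periodicity: invariance under integer translations. -/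
def Zper {m : ℕ} {α : Type*} (g : (Fin m → ℝ) → α) : Prop :=
  ∀ (k : Fin m → ℤ) (y : Fin m → ℝ), g (y + fun i => (k i : ℝ)) = g y

/-- Cut-and-projection irrationality condition: `Rᵀ k ≠ 0` for nonzero integer `k`. -/
def Irr {m n : ℕ} (R : Matrix (Fin m) (Fin n) ℝ) : Prop :=
  ∀ k : Fin m → ℤ, k ≠ 0 → R.transpose.mulVec (fun i => (k i : ℝ)) ≠ 0

/-- Admissible test functions: `φ ∈ L^q(Ω; C_♯(Y^m))`. -/
def TestFun {n m : ℕ} (q : ℝ) (Ω : Set (Fin n → ℝ))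
    (φ : (Fin n → ℝ) → (Fin m → ℝ) → ℝ) : Prop :=
  (∀ x, Continuous (φ x)) ∧ (∀ x, Zper (φ x)) ∧
  (∀ y, AEMeasurable (fun x => φ x y) (volume.restrict Ω)) ∧
  Integrable (fun x => (⨆ y, |φ x y|) ^ q) (volume.restrict Ω)

/-- Weak two-scale cut-and-projection convergence along a sequence of scales `η`. -/
def WeakTwoScale {n m : ℕ} (q : ℝ) (Ω : Set (Fin n → ℝ)) (R : Matrix (Fin m) (Fin n) ℝ)
    (η : ℕ → ℝ) (u : ℕ → (Fin n → ℝ) → ℝ)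
    (u₀ : (Fin n → ℝ) → (Fin m → ℝ) → ℝ) : Prop :=
  ∀ φ : (Fin n → ℝ) → (Fin m → ℝ) → ℝ, TestFun q Ω φ →
    Tendsto (fun k => ∫ x in Ω, u k x * φ x ((η k)⁻¹ • R.mulVec x)) atTop
      (𝓝 (∫ x in Ω, ∫ y in cube m, u₀ x y * φ x y))

/-- Classical gradient on `ℝ^m`. -/
def gradY {m : ℕ} (θ : (Fin m → ℝ) → ℝ) (y : Fin m → ℝ) : Fin m → ℝ :=
  fun j => fderiv ℝ θ y (Pi.single j 1)

/-- The projected gradient `grad_R θ = Rᵀ ∇_y θ`. -/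
def gradR {m n : ℕ} (R : Matrix (Fin m) (Fin n) ℝ) (θ : (Fin m → ℝ) → ℝ)
    (y : Fin m → ℝ) : Fin n → ℝ :=
  R.transpose.mulVec (gradY θ y)

/-- The projected divergence `div_R φ = (Rᵀ ∇_y) · φ`. -/
def divR {m n : ℕ} (R : Matrix (Fin m) (Fin n) ℝ) (φ : (Fin m → ℝ) → Fin n → ℝ)
    (y : Fin m → ℝ) : ℝ :=
  ∑ i, gradR R (fun z => φ z i) y i

/-- `G` is the weak periodic cut-and-projection gradient `grad_R θ`. -/
def IsWeakGradR {m n : ℕ} (R : Matrix (Fin m) (Fin n) ℝ) (θ : (Fin m → ℝ) → ℝ)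
    (G : (Fin m → ℝ) → Fin n → ℝ) : Prop :=
  ∀ ψ : (Fin m → ℝ) → Fin n → ℝ, ContDiff ℝ (⊤ : ℕ∞) ψ → (∀ i, Zper fun y => ψ y i) →
    ∫ y in cube m, θ y * divR R ψ y = - ∫ y in cube m, G y ⬝ᵥ ψ y

/-- `d` is the weak periodic cut-and-projection divergence `div_R φ`. -/
def IsWeakDivR {m n : ℕ} (R : Matrix (Fin m) (Fin n) ℝ) (φ : (Fin m → ℝ) → Fin n → ℝ)
    (d : (Fin m → ℝ) → ℝ) : Prop :=
  ∀ ψ : (Fin m → ℝ) → ℝ, ContDiff ℝ (⊤ : ℕ∞) ψ → Zper ψ →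
    ∫ y in cube m, φ y ⬝ᵥ gradR R ψ y = - ∫ y in cube m, d y * ψ y

/-- `G` is the weak (full) periodic gradient `∇_y θ`. -/
def IsWeakGrad {m : ℕ} (θ : (Fin m → ℝ) → ℝ) (G : (Fin m → ℝ) → Fin m → ℝ) : Prop :=
  ∀ ψ : (Fin m → ℝ) → ℝ, ContDiff ℝ (⊤ : ℕ∞) ψ → Zper ψ → ∀ j,
    ∫ y in cube m, θ y * gradY ψ y j = - ∫ y in cube m, G y j * ψ y

/-- `G` is the weak gradient of `u` on `Ω`. -/
def IsWeakGradOn {n : ℕ} (Ω : Set (Fin n → ℝ)) (u : (Fin n → ℝ) → ℝ)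
    (G : (Fin n → ℝ) → Fin n → ℝ) : Prop :=
  ∀ ψ : (Fin n → ℝ) → ℝ, ContDiff ℝ (⊤ : ℕ∞) ψ → HasCompactSupport ψ → tsupport ψ ⊆ Ω → ∀ j,
    ∫ x in Ω, u x * fderiv ℝ ψ x (Pi.single j 1) = - ∫ x in Ω, G x j * ψ x

/-- `d` is the weak divergence of `v` on `Ω`. -/
def IsWeakDivOn {n : ℕ} (Ω : Set (Fin n → ℝ)) (v : (Fin n → ℝ) → Fin n → ℝ)
    (d : (Fin n → ℝ) → ℝ) : Prop :=
  ∀ ψ : (Fin n → ℝ) → ℝ, ContDiff ℝ (⊤ : ℕ∞) ψ → HasCompactSupport ψ → tsupport ψ ⊆ Ω →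
    ∫ x in Ω, v x ⬝ᵥ (fun j => fderiv ℝ ψ x (Pi.single j 1)) = - ∫ x in Ω, d x * ψ x

/-- Membership in `W_0^{1,p}(Ω)` with weak gradient `G`. -/
def MemW1p0 {n : ℕ} (p : ℝ) (Ω : Set (Fin n → ℝ)) (u : (Fin n → ℝ) → ℝ)
    (G : (Fin n → ℝ) → Fin n → ℝ) : Prop :=
  Integrable (fun x => |u x| ^ p) (volume.restrict Ω) ∧
  Integrable (fun x => ‖G x‖ ^ p) (volume.restrict Ω) ∧
  IsWeakGradOn Ω u G ∧
  ∃ v : ℕ → (Fin n → ℝ) → ℝ,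
    (∀ j, ContDiff ℝ (⊤ : ℕ∞) (v j) ∧ HasCompactSupport (v j) ∧ tsupport (v j) ⊆ Ω) ∧
    Tendsto (fun j => (∫ x in Ω, |v j x - u x| ^ p) +
      ∫ x in Ω, ‖(fun i => fderiv ℝ (v j) x (Pi.single i 1)) - G x‖ ^ p) atTop (𝓝 0)

/-!
View `x ↦ |φ(x, ·)| ^ p` as an integrable map `F` into `C(𝕋^m)`. The functionals
`F ↦ ∫ F(x)(Rx/η) dx` are 1-Lipschitz on `L¹(Ω; C(𝕋^m))`, uniformly in `η`, so by density it is
enough to treat `F = 1_s · e_k` with `s` of finite measure and `e_k` a character. For `k = 0` there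
is nothing to prove. For `k ≠ 0` the integral is the Fourier transform of `1_s` at the frequency
`Rᵀk/η`, which leaves every compact set as `η → 0` because `Rᵀk ≠ 0`; by the Riemann–Lebesgue lemma
it tends to `0`, the mean of `e_k` over the unit cube.
-/

section UniformBoundedness

variable {ι 𝕜 E F : Type*} [NontriviallyNormedField 𝕜] [NormedAddCommGroup E] [NormedSpace 𝕜 E]
  [NormedAddCommGroup F] [NormedSpace 𝕜 F]

theorem tendsto_clm_apply_of_span_dense {l : Filter ι} {T : ι → E →L[𝕜] F} {T₀ : E →L[𝕜] F}
    {C : ℝ} (hT : ∀ i, ‖T i‖ ≤ C) {D : Set E}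
    (hD : (Submodule.span 𝕜 D).topologicalClosure = ⊤)
    (h : ∀ c ∈ D, Tendsto (fun i => T i c) l (𝓝 (T₀ c))) (c : E) :
    Tendsto (fun i => T i c) l (𝓝 (T₀ c)) := by
  have hclosed : IsClosed {c | Tendsto (fun i => T i c) l (𝓝 (T₀ c))} :=
    (LipschitzWith.uniformEquicontinuous (fun i c => T i c) C.toNNReal fun i =>
      (T i).lipschitz.weaken (NNReal.le_toNNReal_of_coe_le (hT i))).equicontinuous
        |>.isClosed_setOfPred_tendsto T₀.continuous
  have hspan : ∀ c ∈ Submodule.span 𝕜 D, Tendsto (fun i => T i c) l (𝓝 (T₀ c)) := by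
    intro c hc
    induction hc using Submodule.span_induction with
    | mem c hc => exact h c hc
    | zero => simpa only [map_zero] using tendsto_const_nhds
    | add c d _ _ hc hd => simpa only [map_add] using hc.add hd
    | smul a c _ hc => simpa only [map_smul] using hc.const_smul a
  have hc : c ∈ (Submodule.span 𝕜 D).topologicalClosure := hD ▸ Submodule.mem_top
  exact closure_minimal hspan hclosed hc

end UniformBoundedness

section ContinuousMapEval

variable {X K : Type*} [MeasurableSpace X] {μ : Measure X} [TopologicalSpace K] [CompactSpace K]

theorem aestronglyMeasurable_of_forall_eval {E : Type*} [NormedAddCommGroup E] [CompleteSpace E]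
    [SecondCountableTopology E] [MeasurableSpace E] [BorelSpace E] [SecondCountableTopology K]
    [R1Space K] {F : X → C(K, E)} (hF : ∀ t, AEMeasurable (fun x => F x t) μ) :
    AEStronglyMeasurable F μ := by
  borelize C(K, E)
  obtain ⟨s, hs_countable, hs_dense⟩ := TopologicalSpace.exists_countable_dense K
  have := hs_countable.to_subtype
  -- Restriction to a countable dense set is continuous and injective between Polish spaces, hence
  -- a Borel isomorphism onto its image (Lusin–Souslin): measurability of `F` is visible there.
  have hrestrict : MeasurableEmbedding fun (c : C(K, E)) (t : s) => c t := by
    refine Continuous.measurableEmbedding (by fun_prop) fun c d hcd => ?_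
    exact ContinuousMap.coe_injective <|
      c.continuous.ext_on hs_dense d.continuous fun t ht => congrFun hcd ⟨t, ht⟩
  obtain ⟨extend, hextend, hextend_restrict⟩ :=
    hrestrict.exists_measurable_extend measurable_id fun _ => ⟨0⟩
  have hF_eq : F = extend ∘ fun x (t : s) => F x t :=
    funext fun x => (congrFun hextend_restrict (F x)).symm
  rw [hF_eq]
  exact (hextend.comp_aemeasurable (aemeasurable_pi_lambda _ fun t => hF t)).aestronglyMeasurable

variable {E : Type*} [NormedAddCommGroup E]

theorem integrable_eval {F : X → C(K, E)} (hF : Integrable F μ) {γ : X → K}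
    (hγ : AEStronglyMeasurable γ μ) : Integrable (fun x => F x (γ x)) μ := by
  refine hF.mono ?_ (ae_of_all _ fun x => (F x).norm_coe_le_norm (γ x))
  have heval : Continuous fun q : C(K, E) × K => q.1 q.2 := by fun_prop
  exact heval.comp_aestronglyMeasurable (hF.aestronglyMeasurable.prodMk hγ)

variable [NormedSpace ℝ E]

theorem lipschitzWith_integral_eval {γ : X → K} (hγ : AEStronglyMeasurable γ μ) :
    LipschitzWith 1 fun F : X →₁[μ] C(K, E) => ∫ x, F x (γ x) ∂μ := by
  refine LipschitzWith.of_dist_le_mul fun F G => ?_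
  rw [NNReal.coe_one, one_mul, dist_eq_norm, dist_eq_norm, L1.norm_eq_integral_norm,
    ← integral_sub (integrable_eval (L1.integrable_coeFn F) hγ)
      (integrable_eval (L1.integrable_coeFn G) hγ)]
  refine norm_integral_le_of_norm_le (L1.integrable_coeFn (F - G)).norm ?_
  filter_upwards [Lp.coeFn_sub F G] with x hx
  rw [hx]
  exact (F x - G x).norm_coe_le_norm (γ x)

variable (μ) [IsFiniteMeasure μ] (𝕜 : Type*) [RCLike 𝕜] [NormedSpace 𝕜 E] [SMulCommClass ℝ 𝕜 E]

/-- Integration of continuous functions against the image of the finite measure `μ` under a map `γ`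
into a compact space, as a continuous linear functional `c ↦ ∫ x, c (γ x) ∂μ`. -/
def integralCompCLM {γ : X → K} (hγ : AEStronglyMeasurable γ μ) : C(K, E) →L[𝕜] E :=
  LinearMap.mkContinuous
    { toFun := fun c => ∫ x, c (γ x) ∂μ
      map_add' := fun c d =>
        integral_add (integrable_eval (integrable_const c) hγ)
          (integrable_eval (integrable_const d) hγ)
      map_smul' := fun a c => integral_smul a fun x => c (γ x) }
    (μ.real Set.univ)
    fun c => (norm_integral_le_of_norm_le_const
      (ae_of_all _ fun x => c.norm_coe_le_norm (γ x))).trans_eq (mul_comm _ _)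

theorem integralCompCLM_apply {γ : X → K} (hγ : AEStronglyMeasurable γ μ) (c : C(K, E)) :
    integralCompCLM μ 𝕜 hγ c = ∫ x, c (γ x) ∂μ := rfl

theorem norm_integralCompCLM_le {γ : X → K} (hγ : AEStronglyMeasurable γ μ) :
    ‖integralCompCLM (E := E) μ 𝕜 hγ‖ ≤ μ.real Set.univ :=
  LinearMap.mkContinuous_norm_le _ measureReal_nonneg _

end ContinuousMapEval

section WeylCriterion

variable {ι X K 𝕜 : Type*} [MeasurableSpace X] {μ : Measure X} [TopologicalSpace K] [CompactSpace K]
  [RCLike 𝕜] {l : Filter ι} {γ : ι → X → K} {J : C(K, 𝕜) →L[𝕜] 𝕜}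

theorem tendsto_integral_eval_of_forall_indicator (hγ : ∀ i, AEStronglyMeasurable (γ i) μ)
    (h : ∀ (c : C(K, 𝕜)) (s : Set X), MeasurableSet s → μ s < ⊤ →
      Tendsto (fun i => ∫ x in s, c (γ i x) ∂μ) l (𝓝 (μ.real s • J c)))
    {F : X → C(K, 𝕜)} (hF : Integrable F μ) :
    Tendsto (fun i => ∫ x, F x (γ i x) ∂μ) l (𝓝 (J (∫ x, F x ∂μ))) := by
  refine Integrable.induction
    (P := fun F : X → C(K, 𝕜) => Tendsto (fun i => ∫ x, F x (γ i x) ∂μ) l (𝓝 (J (∫ x, F x ∂μ))))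
    ?indicator ?add ?isClosed ?ae hF
  case indicator =>
    intro c s hs hμs
    have heval : ∀ i x, s.indicator (fun _ => c) x (γ i x) = s.indicator (fun x => c (γ i x)) x :=
      fun i x => by by_cases hx : x ∈ s <;> simp [hx]
    have hJ : J (μ.real s • c) = μ.real s • J c := J.toLinearMap.map_smul_of_tower _ c
    simpa only [heval, integral_indicator hs, setIntegral_const, hJ] using h c s hs hμs
  case add =>
    intro F G _ hF hG hF_lim hG_lim
    simp only [Pi.add_apply, ContinuousMap.add_apply, integral_add hF hG, map_add,
      integral_add (integrable_eval hF (hγ _)) (integrable_eval hG (hγ _))]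
    exact hF_lim.add hG_lim
  case isClosed =>
    exact (LipschitzWith.uniformEquicontinuous _ 1 fun i =>
      lipschitzWith_integral_eval (hγ i)).equicontinuous.isClosed_setOfPred_tendsto
      (J.continuous.comp continuous_integral)
  case ae =>
    intro F G hFG _ hF_lim
    rw [← integral_congr_ae hFG]
    refine hF_lim.congr fun i => integral_congr_ae ?_
    filter_upwards [hFG] with x hx
    rw [hx]

theorem tendsto_integral_eval_of_span_dense (hγ : ∀ i, AEStronglyMeasurable (γ i) μ)
    {D : Set C(K, 𝕜)} (hD : (Submodule.span 𝕜 D).topologicalClosure = ⊤)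
    (h : ∀ c ∈ D, ∀ s : Set X, MeasurableSet s → μ s < ⊤ →
      Tendsto (fun i => ∫ x in s, c (γ i x) ∂μ) l (𝓝 (μ.real s • J c)))
    {F : X → C(K, 𝕜)} (hF : Integrable F μ) :
    Tendsto (fun i => ∫ x, F x (γ i x) ∂μ) l (𝓝 (J (∫ x, F x ∂μ))) := by
  refine tendsto_integral_eval_of_forall_indicator hγ (fun c s hs hμs => ?_) hF
  have : IsFiniteMeasure (μ.restrict s) := isFiniteMeasure_restrict.2 hμs.ne
  have hbound : ∀ i, ‖integralCompCLM (E := 𝕜) (μ.restrict s) 𝕜 (hγ i).restrict‖ ≤ μ.real s := by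
    intro i
    simpa only [measureReal_restrict_apply_univ] using
      norm_integralCompCLM_le (E := 𝕜) (μ.restrict s) 𝕜 (hγ i).restrict
  have hJ : μ.real s • J c = ((μ.real s : 𝕜) • J) c := RCLike.real_smul_eq_coe_mul _ _
  rw [hJ]
  refine tendsto_clm_apply_of_span_dense hbound hD (fun c hc => ?_) c
  simpa [integralCompCLM_apply, RCLike.real_smul_eq_coe_mul] using h c hc s hs hμs

end WeylCriterion

section Torus

/-- The covering map `ℝ^d → (ℝ/ℤ)^d`, through which periodic functions are identified with functions
on the compact torus. -/
def torusMk (d : Type*) : C(d → ℝ, UnitAddTorus d) :=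
  ⟨fun y i => (y i : UnitAddCircle), by fun_prop⟩

theorem isOpenQuotientMap_torusMk (d : Type*) : IsOpenQuotientMap (torusMk d) :=
  IsOpenQuotientMap.piMap (f := fun _ : d => ((↑) : ℝ → UnitAddCircle))
    fun _ => QuotientAddGroup.isOpenQuotientMap_mk

theorem torusMk_eq_torusMk_iff {d : Type*} {y z : d → ℝ} :
    torusMk d y = torusMk d z ↔ ∃ k : d → ℤ, z = y + fun i => (k i : ℝ) := by
  have hcoord : ∀ i, (y i : UnitAddCircle) = z i ↔ ∃ k : ℤ, z i = y i + k := fun i => by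
    simp only [QuotientAddGroup.eq, AddSubgroup.mem_zmultiples_iff, zsmul_one,
      eq_neg_add_iff_add_eq, eq_comm]
  simp only [torusMk, ContinuousMap.coe_mk, funext_iff, Pi.add_apply, hcoord, Classical.skolem]

theorem Zper.comp {m : ℕ} {α β : Type*} {g : (Fin m → ℝ) → α} (hg : Zper g) (f : α → β) :
    Zper fun y => f (g y) :=
  fun k y => congrArg f (hg k y)

theorem Zper.factorsThrough_torusMk {m : ℕ} {α : Type*} {g : (Fin m → ℝ) → α} (hg : Zper g) :
    g.FactorsThrough (torusMk (Fin m)) := fun y z hyz => by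
  obtain ⟨k, rfl⟩ := torusMk_eq_torusMk_iff.1 hyz
  exact (hg k y).symm

/-- The continuous function on the torus induced by a continuous periodic function, i.e. `C_♯(Y^m)`
realised as the Banach space `C(𝕋^m)`. -/
def Zper.lift {m : ℕ} {α : Type*} [TopologicalSpace α] {g : (Fin m → ℝ) → α} (hg : Zper g)
    (hc : Continuous g) : C(UnitAddTorus (Fin m), α) :=
  (isOpenQuotientMap_torusMk (Fin m)).isQuotientMap.lift ⟨g, hc⟩ hg.factorsThrough_torusMk

@[simp]
theorem Zper.lift_torusMk {m : ℕ} {α : Type*} [TopologicalSpace α] {g : (Fin m → ℝ) → α}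
    (hg : Zper g) (hc : Continuous g) (y : Fin m → ℝ) :
    hg.lift hc (torusMk (Fin m) y) = g y :=
  DFunLike.congr_fun ((isOpenQuotientMap_torusMk (Fin m)).isQuotientMap.lift_comp ⟨g, hc⟩
    hg.factorsThrough_torusMk) y

theorem Zper.isCompact_range {m : ℕ} {α : Type*} [TopologicalSpace α] {g : (Fin m → ℝ) → α}
    (hg : Zper g) (hc : Continuous g) : IsCompact (Set.range g) := by
  have hrange : Set.range g = Set.range (hg.lift hc) := by
    rw [← (isOpenQuotientMap_torusMk (Fin m)).surjective.range_comp]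
    exact congrArg Set.range (funext fun y => (hg.lift_torusMk hc y).symm)
  exact hrange ▸ _root_.isCompact_range (hg.lift hc).continuous

theorem mFourier_torusMk {d : Type*} [Fintype d] (k : d → ℤ) (y : d → ℝ) :
    UnitAddTorus.mFourier k (torusMk d y) = Real.fourierChar ((fun i => (k i : ℝ)) ⬝ᵥ y) := by
  simp only [UnitAddTorus.mFourier, torusMk, ContinuousMap.coe_mk, fourier_coe_apply,
    Real.fourierChar_apply, ← Complex.exp_sum, dotProduct]
  push_cast
  rw [Finset.mul_sum, Finset.sum_mul]
  congr 1
  refine Finset.sum_congr rfl fun i _ => ?_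
  ring

end Torus

section Cube

theorem volume_restrict_cube (m : ℕ) :
    volume.restrict (cube m) = Measure.pi fun _ => volume.restrict (Set.Ioo (0 : ℝ) 1) := by
  rw [cube, volume_pi, Measure.restrict_pi_pi]

instance isProbabilityMeasure_restrict_cube (m : ℕ) :
    IsProbabilityMeasure ((volume : Measure (Fin m → ℝ)).restrict (cube m)) :=
  ⟨by simp [cube, volume_pi_pi]⟩

theorem setIntegral_Ioo_fourier {k : ℤ} (hk : k ≠ 0) :
    ∫ y in Set.Ioo (0 : ℝ) 1, fourier k (y : UnitAddCircle) = 0 := by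
  have hc : 2 * Real.pi * Complex.I * k ≠ 0 := by simp [hk, Real.pi_ne_zero]
  rw [← integral_Ioc_eq_integral_Ioo, ← intervalIntegral.integral_of_le zero_le_one]
  simp only [fourier_coe_apply, Complex.ofReal_one, div_one]
  rw [integral_exp_mul_complex hc]
  have hperiod : Complex.exp (2 * Real.pi * Complex.I * k) = 1 := by
    rw [mul_comm, Complex.exp_int_mul_two_pi_mul_I]
  simp [hperiod]

/-- The mean value over a period as a continuous functional on `C(𝕋^m)`, computed on the open unit
cube; it is the two-scale limit functional. -/
def cubeMean (m : ℕ) : C(UnitAddTorus (Fin m), ℂ) →L[ℂ] ℂ :=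
  integralCompCLM (volume.restrict (cube m)) ℂ (torusMk (Fin m)).continuous.aestronglyMeasurable

theorem cubeMean_apply {m : ℕ} (c : C(UnitAddTorus (Fin m), ℂ)) :
    cubeMean m c = ∫ y in cube m, c (torusMk (Fin m) y) := rfl

theorem cubeMean_one (m : ℕ) : cubeMean m 1 = 1 := by
  simp [cubeMean_apply]

theorem cubeMean_mFourier {m : ℕ} {k : Fin m → ℤ} (hk : k ≠ 0) :
    cubeMean m (UnitAddTorus.mFourier k) = 0 := by
  obtain ⟨i, hi⟩ := Function.ne_iff.1 hk
  rw [cubeMean_apply, volume_restrict_cube]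
  simp only [UnitAddTorus.mFourier, torusMk, ContinuousMap.coe_mk]
  rw [integral_fintype_prod_eq_prod (f := fun i (t : ℝ) => fourier (k i) (t : UnitAddCircle))]
  exact Finset.prod_eq_zero (Finset.mem_univ i) (setIntegral_Ioo_fourier hi)

end Cube

section RiemannLebesgue

theorem tendsto_integral_fourierChar_cocompact {V : Type*} [NormedAddCommGroup V]
    [NormedSpace ℝ V] [FiniteDimensional ℝ V] [MeasurableSpace V] [BorelSpace V]
    {μ ν : Measure V} [IsFiniteMeasure μ] [ν.IsAddHaarMeasure] (hμν : μ ≪ ν) :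
    Tendsto (fun w : StrongDual ℝ V => ∫ x, (Real.fourierChar (w x) : ℂ) ∂μ) (cocompact _)
      (𝓝 0) := by
  have hdensity := tendsto_integral_exp_smul_cocompact (fun x => ((μ.rnDeriv ν x).toReal : ℂ)) ν
  have hneg := (Homeomorph.neg (StrongDual ℝ V)).isClosedEmbedding.tendsto_cocompact
  refine (hdensity.comp hneg).congr fun w => ?_
  rw [← integral_rnDeriv_smul hμν]
  refine integral_congr_ae (ae_of_all _ fun x => ?_)
  simp [Circle.smul_def, mul_comm]

theorem tendsto_inv_smul_cocompact {E : Type*} [NormedAddCommGroup E] [NormedSpace ℝ E]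
    [ProperSpace E] {w : E} (hw : w ≠ 0) :
    Tendsto (fun η : ℝ => η⁻¹ • w) (𝓝[≠] 0) (cocompact E) := by
  rw [← Metric.cobounded_eq_cocompact, ← tendsto_norm_atTop_iff_cobounded]
  simp only [norm_smul]
  exact (tendsto_norm_cobounded_atTop.comp tendsto_inv₀_nhdsNE_zero).atTop_mul_const
    (norm_pos_iff.2 hw)

theorem Irr.tendsto_integral_mFourier {n m : ℕ} {R : Matrix (Fin m) (Fin n) ℝ} (hR : Irr R)
    {μ : Measure (Fin n → ℝ)} [IsFiniteMeasure μ] (hμ : μ ≪ volume) {k : Fin m → ℤ} (hk : k ≠ 0) :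
    Tendsto (fun η : ℝ => ∫ x, UnitAddTorus.mFourier k (torusMk (Fin m) (η⁻¹ • R.mulVec x)) ∂μ)
      (𝓝[≠] 0) (𝓝 0) := by
  let w : StrongDual ℝ (Fin n → ℝ) :=
    LinearMap.toContinuousLinearMap (dotProductBilin ℝ ℝ (R.transpose.mulVec fun i => (k i : ℝ)))
  have hw : w ≠ 0 := fun h =>
    hR k hk <| dotProduct_self_eq_zero.1 <|
      DFunLike.congr_fun h (R.transpose.mulVec fun i => (k i : ℝ))
  refine ((tendsto_integral_fourierChar_cocompact hμ).comp
    (tendsto_inv_smul_cocompact hw)).congr fun η => ?_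
  have hphase : ∀ x, (η⁻¹ • w) x = (fun i => (k i : ℝ)) ⬝ᵥ (η⁻¹ • R.mulVec x) := fun x => by
    rw [dotProduct_smul, dotProduct_mulVec, ← mulVec_transpose]
    rfl
  simp only [Function.comp_apply, hphase, mFourier_torusMk]

end RiemannLebesgue

section TwoScale

variable {n m : ℕ} {μ : Measure (Fin n → ℝ)} {R : Matrix (Fin m) (Fin n) ℝ}

theorem Irr.tendsto_integral_eval (hR : Irr R) (hμ : μ ≪ volume)
    {F : (Fin n → ℝ) → C(UnitAddTorus (Fin m), ℂ)} (hF : Integrable F μ) :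
    Tendsto (fun η : ℝ => ∫ x, F x (torusMk (Fin m) (η⁻¹ • R.mulVec x)) ∂μ) (𝓝[≠] 0)
      (𝓝 (∫ x, cubeMean m (F x) ∂μ)) := by
  rw [(cubeMean m).integral_comp_comm hF]
  refine tendsto_integral_eval_of_span_dense
    (fun η => Continuous.aestronglyMeasurable (by fun_prop))
    UnitAddTorus.span_mFourier_closure_eq_top ?_ hF
  rintro _ ⟨k, rfl⟩ s - hμs
  have : IsFiniteMeasure (μ.restrict s) := isFiniteMeasure_restrict.2 hμs.ne
  rcases eq_or_ne k 0 with rfl | hk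
  · simp [UnitAddTorus.mFourier_zero, cubeMean_one]
  · rw [cubeMean_mFourier hk, smul_zero]
    exact hR.tendsto_integral_mFourier (Measure.restrict_le_self.absolutelyContinuous.trans hμ) hk

theorem Irr.tendsto_integral_periodic (hR : Irr R) (hμ : μ ≪ volume)
    {f : (Fin n → ℝ) → (Fin m → ℝ) → ℂ} (hcont : ∀ x, Continuous (f x)) (hper : ∀ x, Zper (f x))
    (hmeas : ∀ y, AEMeasurable (fun x => f x y) μ) {g : (Fin n → ℝ) → ℝ} (hg : Integrable g μ)
    (hfg : ∀ x y, ‖f x y‖ ≤ g x) :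
    Tendsto (fun η : ℝ => ∫ x, f x (η⁻¹ • R.mulVec x) ∂μ) (𝓝[≠] 0)
      (𝓝 (∫ x, (∫ y in cube m, f x y) ∂μ)) := by
  have hsurj := (isOpenQuotientMap_torusMk (Fin m)).surjective
  have hmeas_lift : AEStronglyMeasurable (fun x => (hper x).lift (hcont x)) μ :=
    aestronglyMeasurable_of_forall_eval <| hsurj.forall.2 fun y => by
      simpa only [Zper.lift_torusMk] using hmeas y
  have hint_lift : Integrable (fun x => (hper x).lift (hcont x)) μ := by
    refine hg.mono' hmeas_lift (ae_of_all _ fun x => ?_)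
    rw [ContinuousMap.norm_le _ ((norm_nonneg _).trans (hfg x 0)), hsurj.forall]
    intro y
    simpa only [Zper.lift_torusMk] using hfg x y
  simpa only [cubeMean_apply, Zper.lift_torusMk] using hR.tendsto_integral_eval hμ hint_lift

end TwoScale

theorem stmt2_general {n m : ℕ} {p : ℝ} (hp : 0 < p) {μ : Measure (Fin n → ℝ)} (hμ : μ ≪ volume)
    {R : Matrix (Fin m) (Fin n) ℝ} (hR : Irr R) {φ : (Fin n → ℝ) → (Fin m → ℝ) → ℝ}
    (hcont : ∀ x, Continuous (φ x)) (hper : ∀ x, Zper (φ x))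
    (hmeas : ∀ y, AEMeasurable (fun x => φ x y) μ)
    (hint : Integrable (fun x => (⨆ y, |φ x y|) ^ p) μ) :
    Tendsto (fun η : ℝ => ∫ x, |φ x (η⁻¹ • R.mulVec x)| ^ p ∂μ) (𝓝[≠] 0)
      (𝓝 (∫ x, (∫ y in cube m, |φ x y| ^ p) ∂μ)) := by
  have habs_le : ∀ x y, |φ x y| ≤ ⨆ y, |φ x y| := fun x =>
    le_ciSup (((hper x).comp abs).isCompact_range (hcont x).abs).bddAbove
  have hcomplex := hR.tendsto_integral_periodic hμ (f := fun x y => ((|φ x y| ^ p : ℝ) : ℂ))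
    (fun x => Complex.continuous_ofReal.comp ((hcont x).abs.rpow_const fun _ => .inr hp.le))
    (fun x => (hper x).comp fun t => ((|t| ^ p : ℝ) : ℂ))
    (fun y => by have := hmeas y; fun_prop) hint fun x y => by
      rw [Complex.norm_of_nonneg (by positivity)]
      exact Real.rpow_le_rpow (abs_nonneg _) (habs_le x y) hp.le
  simp only [integral_complex_ofReal] at hcomplex
  exact tendsto_ofReal_iff.1 hcomplex

/-- functions `φ ∈ L^p(Ω; C_♯(Y^m))` are admissible:
`∫_Ω |φ(x, Rx/η)|^p dx → ∫_Ω ∫_{Y^m} |φ(x,y)|^p dx dy` as `η → 0`. -/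
theorem stmt2 {n m : ℕ} (p : ℝ) (hp : 1 < p)
    (Ω : Set (Fin n → ℝ)) (hΩo : IsOpen Ω) (hΩb : Bornology.IsBounded Ω)
    (R : Matrix (Fin m) (Fin n) ℝ) (hR : Irr R)
    (φ : (Fin n → ℝ) → (Fin m → ℝ) → ℝ)
    (hcont : ∀ x, Continuous (φ x)) (hper : ∀ x, Zper (φ x))
    (hmeas : ∀ y, Measurable fun x => φ x y)
    (hint : Integrable (fun x => (⨆ y, |φ x y|) ^ p) (volume.restrict Ω)) :
    Tendsto (fun η : ℝ => ∫ x in Ω, |φ x (η⁻¹ • R.mulVec x)| ^ p) (𝓝[>] 0)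
      (𝓝 (∫ x in Ω, ∫ y in cube m, |φ x y| ^ p)) := by
  exact (stmt2_general (by linarith) Measure.restrict_le_self.absolutelyContinuous hR hcont hper
    (fun y => (hmeas y).aemeasurable) hint).mono_left (nhdsGT_le_nhdsNE 0)
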